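/- If a and b are closed terms of Λ× of the same type and a = b is not provable in Λ×, then one can construct type-instances a′ of a and b′ of b, closed terms h, h₁, …, h_l (l ≥ 0), and find a natural number i such that, for a variable x : p × p, the equalities π^i(h a′)h₁…h_l (p¹x)(p²x) = p¹x and π^i(h b′)h₁…h_l (p¹x)(p²x) = p²x are provable in Λ×. -/

import Mathlib

set_option autoImplicit false

/-- Types of the typed lambda calculus Λ× : generated from atomic types (`ν`) and the
constant atomic type `T` by `→` and `×`. -/
inductive Tyx (ν : Type) : Type
  | atom : ν → Tyx ν
  | unit : Tyx ν
  | arrow : Tyx ν → Tyx ν → Tyx ν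
  | prod : Tyx ν → Tyx ν → Tyx ν

/-- A typing context. -/
abbrev Ctxx (ν : Type) : Type := List (Tyx ν)

/-- Typed de Bruijn variables. -/
inductive Varx {ν : Type} : Ctxx ν → Tyx ν → Type
  | vz {Γ : Ctxx ν} {A : Tyx ν} : Varx (A :: Γ) A
  | vs {Γ : Ctxx ν} {A B : Tyx ν} : Varx Γ A → Varx (B :: Γ) A

/-- Typed terms of Λ×. -/
inductive Tmx {ν : Type} : Ctxx ν → Tyx ν → Type
  | var {Γ : Ctxx ν} {A : Tyx ν} : Varx Γ A → Tmx Γ A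
  | app {Γ : Ctxx ν} {A B : Tyx ν} : Tmx Γ (Tyx.arrow A B) → Tmx Γ A → Tmx Γ B
  | lam {Γ : Ctxx ν} {A B : Tyx ν} : Tmx (A :: Γ) B → Tmx Γ (Tyx.arrow A B)
  | pair {Γ : Ctxx ν} {A B : Tyx ν} : Tmx Γ A → Tmx Γ B → Tmx Γ (Tyx.prod A B)
  | p1 {Γ : Ctxx ν} {A B : Tyx ν} : Tmx Γ (Tyx.prod A B) → Tmx Γ A
  | p2 {Γ : Ctxx ν} {A B : Tyx ν} : Tmx Γ (Tyx.prod A B) → Tmx Γ B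
  | k {Γ : Ctxx ν} : Tmx Γ Tyx.unit

/-- Renamings between contexts. -/
def Renx {ν : Type} (Γ Δ : Ctxx ν) : Type := ∀ A : Tyx ν, Varx Γ A → Varx Δ A

def Renx.ext {ν : Type} {Γ Δ : Ctxx ν} (ρ : Renx Γ Δ) (A : Tyx ν) :
    ∀ B : Tyx ν, Varx (A :: Γ) B → Varx (A :: Δ) B
  | _, .vz => .vz
  | _, .vs w => .vs (ρ _ w)

def Tmx.rename {ν : Type} : ∀ {Γ Δ : Ctxx ν} {A : Tyx ν}, Renx Γ Δ → Tmx Γ A → Tmx Δ A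
  | _, _, _, ρ, .var v => .var (ρ _ v)
  | _, _, _, ρ, .app f a => .app (f.rename ρ) (a.rename ρ)
  | _, _, _, ρ, .lam b => .lam (b.rename (Renx.ext ρ _))
  | _, _, _, ρ, .pair a b => .pair (a.rename ρ) (b.rename ρ)
  | _, _, _, ρ, .p1 a => .p1 (a.rename ρ)
  | _, _, _, ρ, .p2 a => .p2 (a.rename ρ)
  | _, _, _, _, .k => .k

/-- Simultaneous substitutions. -/
def Substx {ν : Type} (Γ Δ : Ctxx ν) : Type := ∀ A : Tyx ν, Varx Γ A → Tmx Δ A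

def Substx.ext {ν : Type} {Γ Δ : Ctxx ν} (σ : Substx Γ Δ) (A : Tyx ν) :
    ∀ B : Tyx ν, Varx (A :: Γ) B → Tmx (A :: Δ) B
  | _, .vz => .var .vz
  | _, .vs w => (σ _ w).rename (fun _ => Varx.vs)

def Tmx.subst {ν : Type} : ∀ {Γ Δ : Ctxx ν} {A : Tyx ν}, Substx Γ Δ → Tmx Γ A → Tmx Δ A
  | _, _, _, σ, .var v => σ _ v
  | _, _, _, σ, .app f a => .app (f.subst σ) (a.subst σ)
  | _, _, _, σ, .lam b => .lam (b.subst (Substx.ext σ _))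
  | _, _, _, σ, .pair a b => .pair (a.subst σ) (b.subst σ)
  | _, _, _, σ, .p1 a => .p1 (a.subst σ)
  | _, _, _, σ, .p2 a => .p2 (a.subst σ)
  | _, _, _, _, .k => .k

def Substx.cons {ν : Type} {Γ Δ : Ctxx ν} {A : Tyx ν} (b : Tmx Δ A) (σ : Substx Γ Δ) :
    ∀ B : Tyx ν, Varx (A :: Γ) B → Tmx Δ B
  | _, .vz => b
  | _, .vs w => σ _ w

/-- Substitution of a single term for the last variable: `a[b/x]`. -/
def Tmx.subst1 {ν : Type} {Γ : Ctxx ν} {A B : Tyx ν} (a : Tmx (A :: Γ) B) (b : Tmx Γ A) :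
    Tmx Γ B :=
  a.subst (Substx.cons b (fun _ v => .var v))

/-- The theory Λ× of βη-equality with surjective pairing and terminal type `T`. -/
inductive Eqvx {ν : Type} : ∀ {Γ : Ctxx ν} {A : Tyx ν}, Tmx Γ A → Tmx Γ A → Prop
  | refl {Γ : Ctxx ν} {A : Tyx ν} (a : Tmx Γ A) : Eqvx a a
  | symm {Γ : Ctxx ν} {A : Tyx ν} {a b : Tmx Γ A} : Eqvx a b → Eqvx b a
  | trans {Γ : Ctxx ν} {A : Tyx ν} {a b c : Tmx Γ A} : Eqvx a b → Eqvx b c → Eqvx a c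
  | congApp {Γ : Ctxx ν} {A B : Tyx ν} {f g : Tmx Γ (Tyx.arrow A B)} {a b : Tmx Γ A} :
      Eqvx f g → Eqvx a b → Eqvx (.app f a) (.app g b)
  | congLam {Γ : Ctxx ν} {A B : Tyx ν} {a b : Tmx (A :: Γ) B} :
      Eqvx a b → Eqvx (.lam a) (.lam b)
  | congPair {Γ : Ctxx ν} {A B : Tyx ν} {a a' : Tmx Γ A} {b b' : Tmx Γ B} :
      Eqvx a a' → Eqvx b b' → Eqvx (.pair a b) (.pair a' b')
  | congP1 {Γ : Ctxx ν} {A B : Tyx ν} {a b : Tmx Γ (Tyx.prod A B)} :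
      Eqvx a b → Eqvx (.p1 a) (.p1 b)
  | congP2 {Γ : Ctxx ν} {A B : Tyx ν} {a b : Tmx Γ (Tyx.prod A B)} :
      Eqvx a b → Eqvx (.p2 a) (.p2 b)
  | beta {Γ : Ctxx ν} {A B : Tyx ν} (a : Tmx (A :: Γ) B) (b : Tmx Γ A) :
      Eqvx (.app (.lam a) b) (a.subst1 b)
  | eta {Γ : Ctxx ν} {A B : Tyx ν} (a : Tmx Γ (Tyx.arrow A B)) :
      Eqvx (.lam (.app (a.rename (fun _ => Varx.vs)) (.var .vz))) a
  | prodBeta1 {Γ : Ctxx ν} {A B : Tyx ν} (a : Tmx Γ A) (b : Tmx Γ B) :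
      Eqvx (.p1 (.pair a b)) a
  | prodBeta2 {Γ : Ctxx ν} {A B : Tyx ν} (a : Tmx Γ A) (b : Tmx Γ B) :
      Eqvx (.p2 (.pair a b)) b
  | prodEta {Γ : Ctxx ν} {A B : Tyx ν} (c : Tmx Γ (Tyx.prod A B)) :
      Eqvx (.pair (.p1 c) (.p2 c)) c
  | unit {Γ : Ctxx ν} (a : Tmx Γ Tyx.unit) : Eqvx a .k

def Varx.elim0 {ν : Type} {A : Tyx ν} {C : Sort*} : Varx ([] : Ctxx ν) A → C :=
  fun v => nomatch v

/-- Weakening of a closed term into an arbitrary context. -/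
def Tmx.wk {ν : Type} {Δ : Ctxx ν} {A : Tyx ν} (t : Tmx ([] : Ctxx ν) A) : Tmx Δ A :=
  t.rename (fun _ v => v.elim0)

/-- One-step reduction of types of Λ× (replacement of a redex subtype by its
contractum). -/
inductive TyStep {ν : Type} : Tyx ν → Tyx ν → Prop
  | arrProd (A B₁ B₂ : Tyx ν) :
      TyStep (.arrow A (.prod B₁ B₂)) (.prod (.arrow A B₁) (.arrow A B₂))
  | prodArr (A₁ A₂ B : Tyx ν) :
      TyStep (.arrow (.prod A₁ A₂) B) (.arrow A₁ (.arrow A₂ B))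
  | prodAssoc (A B C : Tyx ν) :
      TyStep (.prod A (.prod B C)) (.prod (.prod A B) C)
  | arrUnit (A : Tyx ν) : TyStep (.arrow A .unit) .unit
  | unitArr (B : Tyx ν) : TyStep (.arrow .unit B) B
  | prodUnit (A : Tyx ν) : TyStep (.prod A .unit) A
  | unitProd (A : Tyx ν) : TyStep (.prod .unit A) A
  | arrL {A A' : Tyx ν} (B : Tyx ν) : TyStep A A' → TyStep (.arrow A B) (.arrow A' B)
  | arrR (A : Tyx ν) {B B' : Tyx ν} : TyStep B B' → TyStep (.arrow A B) (.arrow A B')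
  | prodL {A A' : Tyx ν} (B : Tyx ν) : TyStep A A' → TyStep (.prod A B) (.prod A' B)
  | prodR (A : Tyx ν) {B B' : Tyx ν} : TyStep B B' → TyStep (.prod A B) (.prod A B')

/-- A type is in product normal form iff none of its subtypes is a redex, i.e. iff no
type reduction applies to it. -/
def PNF {ν : Type} (A : Tyx ν) : Prop := ∀ B : Tyx ν, ¬ TyStep A B

/-- Substitution of types for the atomic types, on types of Λ×. -/
def Tyx.substA {ν : Type} (σ : ν → Tyx ν) : Tyx ν → Tyx ν
  | .atom v => σ v
  | .unit => .unit
  | .arrow A B => .arrow (A.substA σ) (B.substA σ)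
  | .prod A B => .prod (A.substA σ) (B.substA σ)

def Varx.substA {ν : Type} (σ : ν → Tyx ν) :
    ∀ {Γ : Ctxx ν} {A : Tyx ν}, Varx Γ A → Varx (Γ.map (Tyx.substA σ)) (A.substA σ)
  | _, _, .vz => .vz
  | _, _, .vs v => .vs (v.substA σ)

/-- Substitution of types for the atomic types, on terms of Λ× : type-instances. -/
def Tmx.substA {ν : Type} (σ : ν → Tyx ν) :
    ∀ {Γ : Ctxx ν} {A : Tyx ν}, Tmx Γ A → Tmx (Γ.map (Tyx.substA σ)) (A.substA σ)
  | _, _, .var v => .var (v.substA σ)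
  | _, _, .app f a => .app (f.substA σ) (a.substA σ)
  | _, _, .lam b => .lam (b.substA σ)
  | _, _, .pair a b => .pair (a.substA σ) (b.substA σ)
  | _, _, .p1 a => .p1 (a.substA σ)
  | _, _, .p2 a => .p2 (a.substA σ)
  | _, _, .k => .k

/-- `Tyx.arrs [A₁, …, Aₘ] B = Aₘ → (… → (A₁ → B))` : the type of `λx₁…xₘ.a`. -/
def Tyx.arrs {ν : Type} : Ctxx ν → Tyx ν → Tyx ν
  | [], B => B
  | A :: Γ, B => Tyx.arrs Γ (Tyx.arrow A B)

/-- λ-abstracting all the free variables of a term of Λ×. -/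
def Tmx.lamAll {ν : Type} : ∀ {Γ : Ctxx ν} {A : Tyx ν}, Tmx Γ A → Tmx [] (Tyx.arrs Γ A)
  | [], _, a => a
  | _ :: Γ, _, a => Tmx.lamAll (Γ := Γ) (Tmx.lam a)

/-- `Tyx.arrsR [B₁, …, Bₙ] C = B₁ → (… → (Bₙ → C))`. -/
def Tyx.arrsR {ν : Type} : List (Tyx ν) → Tyx ν → Tyx ν
  | [], C => C
  | B :: Bs, C => Tyx.arrow B (Tyx.arrsR Bs C)

/-- A list of terms `h₁ : B₁, …, hₙ : Bₙ` in context `Δ`. -/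
inductive HListx {ν : Type} (Δ : Ctxx ν) : List (Tyx ν) → Type
  | nil : HListx Δ []
  | cons {B : Tyx ν} {Bs : List (Tyx ν)} : Tmx Δ B → HListx Δ Bs → HListx Δ (B :: Bs)

def HListx.apps {ν : Type} {Δ : Ctxx ν} :
    ∀ {Bs : List (Tyx ν)} {C : Tyx ν}, HListx Δ Bs → Tmx Δ (Tyx.arrsR Bs C) → Tmx Δ C
  | _, _, .nil, t => t
  | _, _, .cons h hs, t => HListx.apps hs (t.app h)

/-- Iterated application `t h₁ … hₙ`. -/
def Tmx.apps {ν : Type} {Δ : Ctxx ν} {Bs : List (Tyx ν)} {C : Tyx ν}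
    (t : Tmx Δ (Tyx.arrsR Bs C)) (hs : HListx Δ Bs) : Tmx Δ C :=
  hs.apps t

/-- `PiStep n i t u` : regarding the type of `t` as an iterated product
`×_{j=1}^n A_j` (left-nested, `n ≥ 1`), `u` is the `i`-th projection `π^i t`
(for `1 ≤ i ≤ n`): `π^i t = t` if `n = 1`, and for `n > 1`, `πⁿ t = p² t` and
`π^i t = π^i (p¹ t)` for `i < n`. -/
inductive PiStep {ν : Type} {Γ : Ctxx ν} : ℕ → ℕ → ∀ {A B : Tyx ν}, Tmx Γ A → Tmx Γ B → Prop
  | one {A : Tyx ν} (t : Tmx Γ A) : PiStep 1 1 t t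
  | last {n : ℕ} {A B : Tyx ν} (t : Tmx Γ (Tyx.prod A B)) : PiStep (n + 1) (n + 1) t (.p2 t)
  | lower {n i : ℕ} {A B C : Tyx ν} (t : Tmx Γ (Tyx.prod A B)) {u : Tmx Γ C} :
      PiStep n i (.p1 t) u → PiStep (n + 1) i t u

/-!
Provable equality is complete for finite models, with one model separating each given pair of
terms.  Normalization by evaluation runs in the full type hierarchy over the set of all sets of
terms: a value is read back as the set of its normal forms in the various contexts.  Reading back
the value of `a` meets only subterms of a normal form of `a`, so the base set can be cut down to
the finite set of sets of such subterms, and unprovability of `a = b` makes the values of `a` and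
`b` over it different.

A finite type hierarchy can in turn be simulated in Λ×.  Encode the base set by tuples of Church
Booleans and let the type-instance replace every atom by the type of these codes.  As all these
types have closed conditionals, every function between finite sets is computed by a closed term, and
equality with a given element of the hierarchy is decided by a closed term.  The test for equality
with the value of `a` maps `a′` to `true` and `b′` to `false`, which are the two projections.
-/

-- `rw` and `simp` have to accept lambda abstractions as renamings and substitutions.
attribute [reducible] Renx Substx

section Substitution

variable {ν : Type} {Γ Δ Θ : Ctxx ν} {A B C : Tyx ν}

theorem Substx.ext_var (ρ : Renx Γ Δ) (A : Tyx ν) :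
    Substx.ext (fun B v => .var (ρ B v)) A = fun B v => .var (Renx.ext ρ A B v) := by
  funext B v; cases v <;> rfl

theorem Substx.ext_id (A : Tyx ν) :
    Substx.ext (fun B (v : Varx Γ B) => .var v) A = fun _ v => .var v := by
  funext B v; cases v <;> rfl

theorem Substx.ext_precomp_rename (ρ : Renx Γ Δ) (σ : Substx Δ Θ) (A : Tyx ν) :
    (fun B v => Substx.ext σ A B (Renx.ext ρ A B v)) = Substx.ext (fun B v => σ B (ρ B v)) A := by
  funext B v; cases v <;> rfl

namespace Tmx

theorem rename_eq_subst (t : Tmx Γ A) (ρ : Renx Γ Δ) :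
    t.rename ρ = t.subst fun B v => .var (ρ B v) := by
  induction t generalizing Δ with
  | lam b ih => simp only [rename, subst, ih, Substx.ext_var]
  | _ => simp_all only [rename, subst]

theorem subst_id (t : Tmx Γ A) : t.subst (fun _ v => .var v) = t := by
  induction t with
  | lam b ih => simp only [subst, Substx.ext_id, ih]
  | _ => simp_all only [subst]

theorem rename_id (t : Tmx Γ A) : t.rename (fun _ v => v) = t := by
  rw [rename_eq_subst, subst_id]

theorem subst_rename (t : Tmx Γ A) (ρ : Renx Γ Δ) (σ : Substx Δ Θ) :
    (t.rename ρ).subst σ = t.subst fun B v => σ B (ρ B v) := by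
  induction t generalizing Δ Θ with
  | lam b ih => simp only [rename, subst, ih, ← Substx.ext_precomp_rename]
  | _ => simp_all only [rename, subst]

theorem rename_rename (t : Tmx Γ A) (ρ : Renx Γ Δ) (ρ' : Renx Δ Θ) :
    (t.rename ρ).rename ρ' = t.rename fun B v => ρ' B (ρ B v) := by
  rw [rename_eq_subst (t.rename ρ), subst_rename, ← rename_eq_subst]

theorem _root_.Substx.ext_postcomp_rename (σ : Substx Γ Δ) (ρ : Renx Δ Θ) (A : Tyx ν) :
    (fun B v => (Substx.ext σ A B v).rename (Renx.ext ρ A)) =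
      Substx.ext (fun B v => (σ B v).rename ρ) A := by
  funext B v
  cases v with
  | vz => rfl
  | vs v => simp only [Substx.ext, rename_rename, Renx.ext]

theorem rename_subst (t : Tmx Γ A) (σ : Substx Γ Δ) (ρ : Renx Δ Θ) :
    (t.subst σ).rename ρ = t.subst fun B v => (σ B v).rename ρ := by
  induction t generalizing Δ Θ with
  | lam b ih => simp only [rename, subst, ih, ← Substx.ext_postcomp_rename]
  | _ => simp_all only [rename, subst]

theorem _root_.Substx.ext_postcomp_subst (σ : Substx Γ Δ) (τ : Substx Δ Θ) (A : Tyx ν) :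
    (fun B v => (Substx.ext σ A B v).subst (Substx.ext τ A)) =
      Substx.ext (fun B v => (σ B v).subst τ) A := by
  funext B v
  cases v with
  | vz => rfl
  | vs v => simp only [Substx.ext, rename_subst, subst_rename]

theorem subst_subst (t : Tmx Γ A) (σ : Substx Γ Δ) (τ : Substx Δ Θ) :
    (t.subst σ).subst τ = t.subst fun B v => (σ B v).subst τ := by
  induction t generalizing Δ Θ with
  | lam b ih => simp only [subst, ih, ← Substx.ext_postcomp_subst]
  | _ => simp_all only [subst]

theorem subst_ext_subst_cons (b : Tmx (A :: Γ) B) (σ : Substx Γ Δ) (τ : Substx Δ Θ) (s : Tmx Θ A) :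
    (b.subst (Substx.ext σ A)).subst (Substx.cons s τ) =
      b.subst (Substx.cons s fun C v => (σ C v).subst τ) := by
  rw [subst_subst]
  congr 1
  funext C v
  cases v with
  | vz => rfl
  | vs v => exact subst_rename _ _ _

theorem subst_ext_subst1 (b : Tmx (A :: Γ) B) (σ : Substx Γ Δ) (s : Tmx Δ A) :
    (b.subst (Substx.ext σ A)).subst1 s = b.subst (Substx.cons s σ) := by
  simp only [subst1, subst_ext_subst_cons, subst_id]

theorem rename_subst1 (b : Tmx (A :: Γ) B) (s : Tmx Γ A) (ρ : Renx Γ Δ) :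
    (b.subst1 s).rename ρ = (b.rename (Renx.ext ρ A)).subst1 (s.rename ρ) := by
  simp only [subst1, rename_subst, subst_rename]
  congr 1
  funext C v
  cases v <;> rfl

theorem rename_eq_wk (t : Tmx [] A) (ρ : Renx [] Δ) : t.rename ρ = t.wk :=
  congrArg (t.rename ·) (funext₂ fun _ v => v.elim0)

theorem wk_nil (t : Tmx ([] : Ctxx ν) A) : (t.wk : Tmx [] A) = t := by
  rw [← rename_eq_wk t fun _ v => v, rename_id]

theorem wk_rename (t : Tmx [] A) (ρ : Renx Γ Δ) : (t.wk : Tmx Γ A).rename ρ = t.wk := by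
  rw [wk, rename_rename, rename_eq_wk]

theorem wk_subst (t : Tmx [] A) (σ : Substx Γ Δ) : (t.wk : Tmx Γ A).subst σ = t.wk := by
  rw [wk, subst_rename, wk, rename_eq_subst]
  exact congrArg (t.subst ·) (funext₂ fun _ v => v.elim0)

end Tmx

namespace Eqvx

theorem congFun {f g : Tmx Γ (.arrow A B)} (h : Eqvx f g) (a : Tmx Γ A) :
    Eqvx (f.app a) (g.app a) :=
  .congApp h (.refl a)

theorem congArg (f : Tmx Γ (.arrow A B)) {a b : Tmx Γ A} (h : Eqvx a b) :
    Eqvx (f.app a) (f.app b) :=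
  .congApp (.refl f) h

theorem eta_rename (f : Tmx Γ (.arrow A B)) (ρ : Renx Γ Δ) :
    Eqvx (.lam (.app (f.rename fun C v => .vs (ρ C v)) (.var .vz))) (f.rename ρ) := by
  simpa only [Tmx.rename_rename] using Eqvx.eta (f.rename ρ)

theorem rename {a b : Tmx Γ A} (h : Eqvx a b) (ρ : Renx Γ Δ) :
    Eqvx (a.rename ρ) (b.rename ρ) := by
  induction h generalizing Δ with
  | refl a => exact .refl _
  | symm _ ih => exact .symm (ih ρ)
  | trans _ _ ih₁ ih₂ => exact .trans (ih₁ ρ) (ih₂ ρ)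
  | congApp _ _ ih₁ ih₂ => exact .congApp (ih₁ ρ) (ih₂ ρ)
  | congLam _ ih => exact .congLam (ih _)
  | congPair _ _ ih₁ ih₂ => exact .congPair (ih₁ ρ) (ih₂ ρ)
  | congP1 _ ih => exact .congP1 (ih ρ)
  | congP2 _ ih => exact .congP2 (ih ρ)
  | beta a b => rw [Tmx.rename_subst1]; exact .beta _ _
  | eta a =>
    simp only [Tmx.rename, Tmx.rename_rename]
    exact eta_rename a ρ
  | prodBeta1 a b => exact .prodBeta1 _ _
  | prodBeta2 a b => exact .prodBeta2 _ _
  | prodEta c => exact .prodEta _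
  | unit a => exact .unit _

theorem beta_subst (b : Tmx (A :: Γ) B) (σ : Substx Γ Δ) (s : Tmx Δ A) :
    Eqvx (.app ((Tmx.lam b).subst σ) s) (b.subst (Substx.cons s σ)) := by
  rw [← Tmx.subst_ext_subst1]
  exact .beta _ _

theorem beta₂ (a : Tmx (B :: A :: Γ) C) (s : Tmx Γ A) (t : Tmx Γ B) :
    Eqvx (.app (.app (.lam (.lam a)) s) t)
      (a.subst (Substx.cons t (Substx.cons s fun _ v => .var v))) :=
  ((Eqvx.beta _ s).congFun t).trans (beta_subst a _ t)

theorem beta₃ {D : Tyx ν} (a : Tmx (C :: B :: A :: Γ) D) (s : Tmx Γ A) (t : Tmx Γ B) (u : Tmx Γ C) :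
    Eqvx (.app (.app (.app (.lam (.lam (.lam a))) s) t) u)
      (a.subst (Substx.cons u (Substx.cons t (Substx.cons s fun _ v => .var v)))) :=
  ((beta₂ _ s t).congFun u).trans (beta_subst a _ u)

end Eqvx

end Substitution

section Model

variable {ν : Type}

/-- The full type hierarchy over the set `X`, which interprets every atomic type. -/
def Interp (X : Type) : Tyx ν → Type
  | .atom _ => X
  | .unit => PUnit
  | .arrow A B => Interp X A → Interp X B
  | .prod A B => Interp X A × Interp X B

instance Interp.finite (X : Type) [Finite X] : ∀ A : Tyx ν, Finite (Interp X A)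
  | .atom _ => inferInstanceAs (Finite X)
  | .unit => inferInstanceAs (Finite PUnit)
  | .arrow A B =>
    have := Interp.finite X A
    have := Interp.finite X B
    inferInstanceAs (Finite (Interp X A → Interp X B))
  | .prod A B =>
    have := Interp.finite X A
    have := Interp.finite X B
    inferInstanceAs (Finite (Interp X A × Interp X B))

instance Interp.nonempty (X : Type) [Nonempty X] : ∀ A : Tyx ν, Nonempty (Interp X A)
  | .atom _ => inferInstanceAs (Nonempty X)
  | .unit => inferInstanceAs (Nonempty PUnit)
  | .arrow A B =>
    have := Interp.nonempty X B
    inferInstanceAs (Nonempty (Interp X A → Interp X B))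
  | .prod A B =>
    have := Interp.nonempty X A
    have := Interp.nonempty X B
    inferInstanceAs (Nonempty (Interp X A × Interp X B))

/-- Assignments of elements of the full type hierarchy over `X` to the variables of `Γ`. -/
abbrev Envx (X : Type) (Γ : Ctxx ν) : Type := ∀ A : Tyx ν, Varx Γ A → Interp X A

namespace Envx

/-- The assignment for the empty context. -/
def nil (X : Type) : Envx X ([] : Ctxx ν) := fun _ v => v.elim0

/-- Assigns `x` to the last variable. -/
def cons {X : Type} {Γ : Ctxx ν} {A : Tyx ν} (x : Interp X A) (η : Envx X Γ) : Envx X (A :: Γ)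
  | _, .vz => x
  | _, .vs v => η _ v

end Envx

/-- The value of a term in the full type hierarchy over `X`. -/
def Tmx.eval (X : Type) : ∀ {Γ : Ctxx ν} {A : Tyx ν}, Tmx Γ A → Envx X Γ → Interp X A
  | _, _, .var v, η => η _ v
  | _, _, .app f a, η => (f.eval X η : Interp X _ → Interp X _) (a.eval X η)
  | _, _, .lam b, η => fun x => b.eval X (Envx.cons x η)
  | _, _, .pair a b, η => (a.eval X η, b.eval X η)
  | _, _, .p1 a, η => (a.eval X η : Interp X _ × Interp X _).1
  | _, _, .p2 a, η => (a.eval X η : Interp X _ × Interp X _).2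
  | _, _, .k, _ => PUnit.unit

end Model

section Worlds

variable {ν : Type} {Δ Γ Θ : Ctxx ν} {A : Tyx ν}

/-- Context extensions, the order on the worlds of the Kripke logical relation `LogRel`.  Unlike
renamings, they are unique, so that a variable is determined by its context and de Bruijn level. -/
inductive Extx (Δ : Ctxx ν) : Ctxx ν → Type
  | refl : Extx Δ Δ
  | step {Γ : Ctxx ν} (A : Tyx ν) : Extx Δ Γ → Extx Δ (A :: Γ)

namespace Extx

/-- The weakening renaming along a context extension. -/
def ren : ∀ {Γ : Ctxx ν}, Extx Δ Γ → Renx Δ Γ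
  | _, .refl => fun _ v => v
  | _, .step _ e => fun _ v => .vs (e.ren _ v)

/-- Composition of context extensions. -/
def trans (e : Extx Δ Γ) : ∀ {Θ : Ctxx ν}, Extx Γ Θ → Extx Δ Θ
  | _, .refl => e
  | _, .step A e' => .step A (e.trans e')

theorem ren_trans (e : Extx Δ Γ) (e' : Extx Γ Θ) :
    (e.trans e').ren = fun A v => e'.ren A (e.ren A v) := by
  induction e' with
  | refl => rfl
  | step A e' ih => simp only [trans, ren, ih]

theorem length_le (e : Extx Δ Γ) : Δ.length ≤ Γ.length := by
  induction e with
  | refl => exact le_rfl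
  | step A _ ih => exact ih.trans (Nat.le_succ _)

instance subsingleton : Subsingleton (Extx Δ Γ) where
  allEq e e' := by
    induction e with
    | refl =>
      cases e' with
      | refl => rfl
      | step A e' => exact absurd e'.length_le (Nat.not_succ_le_self _)
    | step A e ih =>
      cases e' with
      | refl => exact absurd e.length_le (Nat.not_succ_le_self _)
      | step A e' => rw [ih e']

end Extx

namespace Tmx

/-- Weakening along a context extension. -/
def ex (t : Tmx Δ A) (e : Extx Δ Γ) : Tmx Γ A := t.rename e.ren

theorem ex_refl (t : Tmx Δ A) : t.ex .refl = t := t.rename_id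

theorem ex_trans (t : Tmx Δ A) (e : Extx Δ Γ) (e' : Extx Γ Θ) :
    t.ex (e.trans e') = (t.ex e).ex e' := by
  rw [ex, ex, ex, rename_rename, Extx.ren_trans]

end Tmx

end Worlds

section FiniteCompleteness

variable {ν : Type} {Δ Γ : Ctxx ν} {A B : Tyx ν}

/-- Terms of all types in all contexts. -/
abbrev PackedTm (ν : Type) : Type := Σ (Γ : Ctxx ν) (A : Tyx ν), Tmx Γ A

namespace Tmx

/-- A term as an element of `PackedTm`. -/
def pack (t : Tmx Γ A) : PackedTm ν := ⟨Γ, A, t⟩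

/-- The subterms of a term, including the term itself. -/
def subterms : ∀ {Γ : Ctxx ν} {A : Tyx ν}, Tmx Γ A → Set (PackedTm ν)
  | _, _, .var v => {(var v).pack}
  | _, _, .app f a => insert (app f a).pack (f.subterms ∪ a.subterms)
  | _, _, .lam b => insert (lam b).pack b.subterms
  | _, _, .pair a b => insert (pair a b).pack (a.subterms ∪ b.subterms)
  | _, _, .p1 a => insert (p1 a).pack a.subterms
  | _, _, .p2 a => insert (p2 a).pack a.subterms
  | Γ, _, .k => {(k : Tmx Γ .unit).pack}

theorem finite_subterms (t : Tmx Γ A) : t.subterms.Finite := by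
  induction t <;> simp_all [subterms]

end Tmx

/-- The base set of the model used for completeness: its elements are the subsets of `S`, a set of
terms large enough to contain the subterms of the normal form at hand. -/
abbrev Dom (S : Set (PackedTm ν)) : Type := 𝒫 S

namespace Dom

variable {S : Set (PackedTm ν)}

/-- The part of `D` that lies in `S`. -/
def restrict (S D : Set (PackedTm ν)) : Dom S := ⟨S ∩ D, Set.inter_subset_left⟩

/-- The variable bound by an abstraction over a term in context `Γ`, weakened to all further
extensions of the context. -/
def newVar (S : Set (PackedTm ν)) (A : Tyx ν) (Γ : Ctxx ν) : Dom S :=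
  restrict S {x | ∃ (Θ : Ctxx ν) (e : Extx (A :: Γ) Θ), x = (Tmx.var (e.ren A .vz)).pack}

/-- The applications of members of `d` to members of `e`, in a common context. -/
def app (A B : Tyx ν) (d e : Dom S) : Dom S :=
  restrict S {x | ∃ (Γ : Ctxx ν) (f : Tmx Γ (.arrow A B)) (a : Tmx Γ A),
    f.pack ∈ d.1 ∧ a.pack ∈ e.1 ∧ x = (f.app a).pack}

/-- The abstractions, where the body of one in context `Γ` is taken from `d Γ`. -/
def lam (A B : Tyx ν) (d : Ctxx ν → Dom S) : Dom S :=
  restrict S {x | ∃ (Γ : Ctxx ν) (b : Tmx (A :: Γ) B), b.pack ∈ (d Γ).1 ∧ x = b.lam.pack}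

/-- The pairs of a member of `d` and one of `e`, in a common context. -/
def pair (A B : Tyx ν) (d e : Dom S) : Dom S :=
  restrict S {x | ∃ (Γ : Ctxx ν) (a : Tmx Γ A) (b : Tmx Γ B),
    a.pack ∈ d.1 ∧ b.pack ∈ e.1 ∧ x = (a.pair b).pack}

/-- The first projections of members of `d`. -/
def p1 (A B : Tyx ν) (d : Dom S) : Dom S :=
  restrict S {x | ∃ (Γ : Ctxx ν) (c : Tmx Γ (.prod A B)), c.pack ∈ d.1 ∧ x = c.p1.pack}

/-- The second projections of members of `d`. -/
def p2 (A B : Tyx ν) (d : Dom S) : Dom S :=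
  restrict S {x | ∃ (Γ : Ctxx ν) (c : Tmx Γ (.prod A B)), c.pack ∈ d.1 ∧ x = c.p2.pack}

/-- The constant `k` in all contexts. -/
def k (S : Set (PackedTm ν)) : Dom S :=
  restrict S {x | ∃ Γ : Ctxx ν, x = (Tmx.k : Tmx Γ .unit).pack}

end Dom

mutual

/-- Reads a semantic value back as the set of its normal forms lying in `S`. -/
def reify (S : Set (PackedTm ν)) : ∀ A : Tyx ν, Interp (Dom S) A → Dom S
  | .atom _ => fun d => d
  | .unit => fun _ => Dom.k S
  | .arrow A B => fun f => Dom.lam A B fun Γ => reify S B (f (reflect S A (Dom.newVar S A Γ)))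
  | .prod A B => fun v => Dom.pair A B (reify S A v.1) (reify S B v.2)

/-- The semantic value of a neutral term. -/
def reflect (S : Set (PackedTm ν)) : ∀ A : Tyx ν, Dom S → Interp (Dom S) A
  | .atom _ => fun d => d
  | .unit => fun _ => PUnit.unit
  | .arrow A B => fun d v => reflect S B (Dom.app A B d (reify S A v))
  | .prod A B => fun d => (reflect S A (Dom.p1 A B d), reflect S B (Dom.p2 A B d))

end

/-- In every extension of `Δ`, all members of `d` are provably equal to `t`, and some term `s`
belongs to `d S` as soon as `S` contains its subterms.  The term `s` does not depend on `S`; this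
is what makes a finite `S` sufficient in the end. -/
def Represents (t : Tmx Δ A) (d : ∀ S : Set (PackedTm ν), Dom S) : Prop :=
  ∀ (Γ : Ctxx ν) (e : Extx Δ Γ),
    (∃ s : Tmx Γ A, ∀ S, s.subterms ⊆ S → s.pack ∈ (d S).1) ∧
      ∀ (S : Set (PackedTm ν)) (u : Tmx Γ A), u.pack ∈ (d S).1 → Eqvx u (t.ex e)

namespace Represents

variable {t : Tmx Δ A} {d d' : ∀ S : Set (PackedTm ν), Dom S}

theorem of_eqvx {t' : Tmx Δ A} (ht : Eqvx t t') (h : Represents t d) : Represents t' d :=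
  fun Γ e => (h Γ e).imp_right fun hu S u hS => (hu S u hS).trans (ht.rename _)

theorem mono (h : Represents t d) (e : Extx Δ Γ) : Represents (t.ex e) d := by
  intro Θ e'
  rw [← Tmx.ex_trans]
  exact h Θ (e.trans e')

theorem newVar (A : Tyx ν) (Γ : Ctxx ν) :
    Represents (.var .vz : Tmx (A :: Γ) A) fun S => Dom.newVar S A Γ := by
  refine fun Θ e => ⟨⟨.var (e.ren A .vz), fun S hS => ⟨hS rfl, Θ, e, rfl⟩⟩, ?_⟩
  rintro S u ⟨-, Θ, e', ⟨⟩⟩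
  rw [Subsingleton.elim e e']
  exact .refl _

theorem app {f : Tmx Δ (.arrow A B)} (hf : Represents f d) (ht : Represents t d') :
    Represents (f.app t) fun S => Dom.app A B (d S) (d' S) := by
  intro Γ e
  obtain ⟨⟨f₀, hf₀⟩, hf⟩ := hf Γ e
  obtain ⟨⟨t₀, ht₀⟩, ht⟩ := ht Γ e
  refine ⟨⟨f₀.app t₀, fun S hS => ?_⟩, ?_⟩
  · obtain ⟨hS, hS'⟩ := Set.insert_subset_iff.1 hS
    obtain ⟨hSf, hSt⟩ := Set.union_subset_iff.1 hS'
    exact ⟨hS, Γ, f₀, t₀, hf₀ S hSf, ht₀ S hSt, rfl⟩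
  · rintro S u ⟨-, Γ, g, s, hg, hs, ⟨⟩⟩
    exact .congApp (hf S g hg) (ht S s hs)

theorem lam {t : Tmx Δ (.arrow A B)} {d : Ctxx ν → ∀ S : Set (PackedTm ν), Dom S}
    (h : ∀ (Γ : Ctxx ν) (e : Extx Δ Γ),
      Represents ((t.ex (e.step A)).app (.var .vz)) (d Γ)) :
    Represents t fun S => Dom.lam A B fun Γ => d Γ S := by
  intro Γ e
  obtain ⟨⟨b₀, hb₀⟩, hb⟩ := h Γ e (A :: Γ) .refl
  refine ⟨⟨b₀.lam, fun S hS => ?_⟩, ?_⟩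
  · obtain ⟨hS, hSb⟩ := Set.insert_subset_iff.1 hS
    exact ⟨hS, Γ, b₀, hb₀ S hSb, rfl⟩
  · rintro S u ⟨-, Γ, b, hbS, ⟨⟩⟩
    have hbe := hb S b hbS
    rw [Tmx.ex_refl] at hbe
    exact (Eqvx.congLam hbe).trans (.eta_rename t e.ren)

theorem pair {c : Tmx Δ (.prod A B)} (h₁ : Represents c.p1 d) (h₂ : Represents c.p2 d') :
    Represents c fun S => Dom.pair A B (d S) (d' S) := by
  intro Γ e
  obtain ⟨⟨a₀, ha₀⟩, ha⟩ := h₁ Γ e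
  obtain ⟨⟨b₀, hb₀⟩, hb⟩ := h₂ Γ e
  refine ⟨⟨a₀.pair b₀, fun S hS => ?_⟩, ?_⟩
  · obtain ⟨hS, hS'⟩ := Set.insert_subset_iff.1 hS
    obtain ⟨hSa, hSb⟩ := Set.union_subset_iff.1 hS'
    exact ⟨hS, Γ, a₀, b₀, ha₀ S hSa, hb₀ S hSb, rfl⟩
  · rintro S u ⟨-, Γ, a, b, haS, hbS, ⟨⟩⟩
    exact (Eqvx.congPair (ha S a haS) (hb S b hbS)).trans (.prodEta _)

theorem p1 {c : Tmx Δ (.prod A B)} (h : Represents c d) :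
    Represents c.p1 fun S => Dom.p1 A B (d S) := by
  intro Γ e
  obtain ⟨⟨c₀, hc₀⟩, hc⟩ := h Γ e
  refine ⟨⟨c₀.p1, fun S hS => ?_⟩, ?_⟩
  · obtain ⟨hS, hSc⟩ := Set.insert_subset_iff.1 hS
    exact ⟨hS, Γ, c₀, hc₀ S hSc, rfl⟩
  · rintro S u ⟨-, Γ, c', hc', ⟨⟩⟩
    exact .congP1 (hc S c' hc')

theorem p2 {c : Tmx Δ (.prod A B)} (h : Represents c d) :
    Represents c.p2 fun S => Dom.p2 A B (d S) := by
  intro Γ e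
  obtain ⟨⟨c₀, hc₀⟩, hc⟩ := h Γ e
  refine ⟨⟨c₀.p2, fun S hS => ?_⟩, ?_⟩
  · obtain ⟨hS, hSc⟩ := Set.insert_subset_iff.1 hS
    exact ⟨hS, Γ, c₀, hc₀ S hSc, rfl⟩
  · rintro S u ⟨-, Γ, c', hc', ⟨⟩⟩
    exact .congP2 (hc S c' hc')

theorem k (t : Tmx Δ .unit) : Represents t Dom.k :=
  fun Γ _ => ⟨⟨.k, fun _ hS => ⟨hS rfl, Γ, rfl⟩⟩,
    fun _ u _ => (Eqvx.unit u).trans (.symm (.unit _))⟩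

end Represents

/-- The Kripke logical relation between terms and families of semantic values, indexed by the set
of terms on which the model is built. -/
def LogRel : ∀ (A : Tyx ν) {Δ : Ctxx ν},
    Tmx Δ A → (∀ S : Set (PackedTm ν), Interp (Dom S) A) → Prop
  | .atom _, _, t, d => Represents t d
  | .unit, _, _, _ => True
  | .arrow A B, Δ, t, f =>
    ∀ (Γ : Ctxx ν) (e : Extx Δ Γ) (s : Tmx Γ A) (v : ∀ S : Set (PackedTm ν), Interp (Dom S) A),
      LogRel A s v →
        LogRel B ((t.ex e).app s) fun S => (f S : Interp (Dom S) A → Interp (Dom S) B) (v S)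
  | .prod A B, _, t, v =>
    LogRel A t.p1 (fun S => (v S : Interp (Dom S) A × Interp (Dom S) B).1) ∧
      LogRel B t.p2 (fun S => (v S : Interp (Dom S) A × Interp (Dom S) B).2)

namespace LogRel

theorem of_eqvx : ∀ {A : Tyx ν} {Δ : Ctxx ν} {t t' : Tmx Δ A}
    {v : ∀ S : Set (PackedTm ν), Interp (Dom S) A}, Eqvx t t' → LogRel A t v → LogRel A t' v
  | .atom _, _, _, _, _, ht, h => Represents.of_eqvx ht h
  | .unit, _, _, _, _, _, _ => trivial
  | .arrow _ _, _, _, _, _, ht, h => fun Γ e s v hv =>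
    of_eqvx ((ht.rename _).congFun s) (h Γ e s v hv)
  | .prod _ _, _, _, _, _, ht, h => ⟨of_eqvx (.congP1 ht) h.1, of_eqvx (.congP2 ht) h.2⟩

theorem mono : ∀ {A : Tyx ν} {Δ Γ : Ctxx ν} {t : Tmx Δ A}
    {v : ∀ S : Set (PackedTm ν), Interp (Dom S) A} (e : Extx Δ Γ),
    LogRel A t v → LogRel A (t.ex e) v
  | .atom _, _, _, _, _, e, h => Represents.mono h e
  | .unit, _, _, _, _, _, _ => trivial
  | .arrow _ _, _, _, _, _, e, h => fun Γ e' s v hv => by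
    rw [← Tmx.ex_trans]
    exact h Γ (e.trans e') s v hv
  | .prod _ _, _, _, _, _, e, h => ⟨h.1.mono e, h.2.mono e⟩

end LogRel

mutual

theorem LogRel.represents_reify : ∀ {A : Tyx ν} {Δ : Ctxx ν} {t : Tmx Δ A}
    {v : ∀ S : Set (PackedTm ν), Interp (Dom S) A},
    LogRel A t v → Represents t fun S => reify S A (v S)
  | .atom _, _, _, _, h => h
  | .unit, _, t, _, _ => .k t
  | .arrow A _, _, _, _, h => .lam fun Γ e =>
    LogRel.represents_reify (h (A :: Γ) (e.step A) _ _
      (Represents.newVar A Γ).logRel_reflect)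
  | .prod _ _, _, _, _, h => .pair (LogRel.represents_reify h.1) (LogRel.represents_reify h.2)

theorem Represents.logRel_reflect : ∀ {A : Tyx ν} {Δ : Ctxx ν} {t : Tmx Δ A}
    {d : ∀ S : Set (PackedTm ν), Dom S},
    Represents t d → LogRel A t fun S => reflect S A (d S)
  | .atom _, _, _, _, h => h
  | .unit, _, _, _, _ => trivial
  | .arrow _ _, _, _, _, h => fun _ e _ _ hv =>
    ((h.mono e).app hv.represents_reify).logRel_reflect
  | .prod _ _, _, _, _, h => ⟨h.p1.logRel_reflect, h.p2.logRel_reflect⟩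

end

theorem Tmx.logRel_subst_eval (t : Tmx Δ A) (σ : Substx Δ Γ)
    (η : ∀ S : Set (PackedTm ν), Envx (Dom S) Δ)
    (h : ∀ (B : Tyx ν) (v : Varx Δ B), LogRel B (σ B v) fun S => η S B v) :
    LogRel A (t.subst σ) fun S => t.eval (Dom S) (η S) := by
  induction t generalizing Γ with
  | var v => exact h _ v
  | k => trivial
  | app f a ihf iha =>
    have hf := ihf σ η h Γ .refl _ _ (iha σ η h)
    rwa [ex_refl] at hf
  | pair a b iha ihb =>
    exact ⟨.of_eqvx (.symm (.prodBeta1 _ _)) (iha σ η h),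
      .of_eqvx (.symm (.prodBeta2 _ _)) (ihb σ η h)⟩
  | p1 a ih => exact (ih σ η h).1
  | p2 a ih => exact (ih σ η h).2
  | lam b ih =>
    intro Θ e s v hv
    rw [ex, rename_subst]
    refine .of_eqvx (.symm (.beta_subst b _ s)) (ih _ (fun S => Envx.cons (v S) (η S)) ?_)
    rintro C (_ | w)
    exacts [hv, (h C w).mono e]

theorem Tmx.represents_reify_eval (t : Tmx [] A) :
    Represents t fun S => reify S A (t.eval (Dom S) (.nil _)) := by
  have h := t.logRel_subst_eval (fun _ v => .var v) (fun S => .nil (Dom S)) fun _ v => v.elim0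
  rw [subst_id] at h
  exact h.represents_reify

theorem exists_finite_eval_ne {a b : Tmx ([] : Ctxx ν) A} (hab : ¬ Eqvx a b) :
    ∃ X : Type, Finite X ∧ Nonempty X ∧ a.eval X (.nil X) ≠ b.eval X (.nil X) := by
  obtain ⟨⟨s, hs⟩, ha⟩ := a.represents_reify_eval [] .refl
  obtain ⟨-, hb⟩ := b.represents_reify_eval [] .refl
  refine ⟨Dom s.subterms, s.finite_subterms.finite_subsets.to_subtype,
    ⟨⟨∅, Set.empty_subset _⟩⟩, fun heval => hab ?_⟩
  have hmem := hs _ subset_rfl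
  have hsa := ha _ s hmem
  have hsb := hb _ s (by simpa only [heval] using hmem)
  rw [Tmx.ex_refl] at hsa hsb
  exact hsa.symm.trans hsb

end FiniteCompleteness

section Conditionals

variable {ν : Type} {p : ν} {Γ : Ctxx ν} {A B C τ τ' : Tyx ν}

/-- The type of the Church Booleans over the atom `p`. -/
abbrev Tyx.bool (p : ν) : Tyx ν := .arrow (.atom p) (.arrow (.atom p) (.atom p))

namespace Tmx

/-- The Church Booleans `true = λxy.x` and `false = λxy.y`. -/
def bool (p : ν) : Bool → Tmx [] (Tyx.bool p)
  | true => .lam (.lam (.var (.vs .vz)))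
  | false => .lam (.lam (.var .vz))

/-- The constant function with value `s`. -/
def const (A : Tyx ν) (s : Tmx [] B) : Tmx [] (.arrow A B) := .lam s.wk

/-- The composition of `f` with the function given by a term in one variable. -/
def comp (f : Tmx [] (.arrow B C)) (b : Tmx [A] B) : Tmx [] (.arrow A C) := .lam (f.wk.app b)

end Tmx

namespace Eqvx

theorem bool_app (b : Bool) (t s : Tmx Γ (.atom p)) :
    Eqvx (((Tmx.bool p b).wk.app t).app s) (bif b then t else s) := by
  cases b <;> exact beta₂ _ _ _

theorem wk_app_app {t : Tmx [] (Tyx.bool p)} {b : Bool} (h : Eqvx t (Tmx.bool p b))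
    (x y : Tmx Γ (.atom p)) :
    Eqvx ((t.wk.app x).app y) (bif b then x else y) :=
  (((h.rename _).congFun x).congFun y).trans (.bool_app b x y)

theorem const_app (s : Tmx [] B) (t : Tmx [] A) : Eqvx ((Tmx.const A s).app t) s := by
  simpa only [Tmx.const, Tmx.subst1, Tmx.wk_subst, Tmx.wk_nil] using Eqvx.beta s.wk t

theorem comp_app (f : Tmx [] (.arrow B C)) (b : Tmx [A] B) (t : Tmx [] A) :
    Eqvx ((f.comp b).app t) (f.app (b.subst1 t)) := by
  simpa only [Tmx.comp, Tmx.subst1, Tmx.subst, Tmx.wk_subst, Tmx.wk_nil]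
    using Eqvx.beta (f.wk.app b) t

end Eqvx

/-- The type `τ` has a closed conditional on the Church Booleans over `p`. -/
def HasCond (p : ν) (τ : Tyx ν) : Prop :=
  ∃ I : Tmx [] (.arrow (Tyx.bool p) (.arrow τ (.arrow τ τ))),
    ∀ (Γ : Ctxx ν) (b : Bool) (t s : Tmx Γ τ),
      Eqvx (((I.wk.app (Tmx.bool p b).wk).app t).app s) (bif b then t else s)

namespace HasCond

theorem atom (p : ν) : HasCond p (.atom p) :=
  ⟨.lam (.var .vz), fun _ b t s =>
    (((Eqvx.beta _ _).congFun t).congFun s).trans (.bool_app b t s)⟩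

theorem unit (p : ν) : HasCond p .unit :=
  ⟨.lam (.lam (.lam .k)), fun _ _ _ _ => (Eqvx.unit _).trans (.symm (.unit _))⟩

theorem prod (h : HasCond p τ) (h' : HasCond p τ') : HasCond p (.prod τ τ') := by
  obtain ⟨I, hI⟩ := h
  obtain ⟨J, hJ⟩ := h'
  refine ⟨.lam (.lam (.lam (.pair
    (.app (.app (.app I.wk (.var (.vs (.vs .vz)))) (.p1 (.var (.vs .vz)))) (.p1 (.var .vz)))
    (.app (.app (.app J.wk (.var (.vs (.vs .vz)))) (.p2 (.var (.vs .vz)))) (.p2 (.var .vz)))))),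
    fun Γ b t s => (Eqvx.beta₃ _ _ _ _).trans ?_⟩
  simp only [Tmx.rename, Renx.ext, Tmx.subst, Substx.cons, Tmx.wk_rename, Tmx.wk_subst]
  refine (Eqvx.congPair (hI _ _ _ _) (hJ _ _ _ _)).trans ?_
  cases b <;> exact .prodEta _

theorem arrow (h : HasCond p τ') : HasCond p (.arrow τ τ') := by
  obtain ⟨I, hI⟩ := h
  refine ⟨.lam (.lam (.lam (.lam (.app
    (.app (.app I.wk (.var (.vs (.vs (.vs .vz))))) (.app (.var (.vs (.vs .vz))) (.var .vz)))
    (.app (.var (.vs .vz)) (.var .vz)))))),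
    fun Γ b t s => (Eqvx.beta₃ _ _ _ _).trans ?_⟩
  simp only [Tmx.rename, Renx.ext, Tmx.subst, Substx.ext, Substx.cons, Tmx.wk_rename, Tmx.wk_subst]
  refine (Eqvx.congLam (hI _ _ _ _)).trans ?_
  cases b <;> exact .eta _

theorem bool (p : ν) : HasCond p (Tyx.bool p) := (atom p).arrow.arrow

theorem substA (h : HasCond p τ) : ∀ A : Tyx ν, HasCond p (A.substA fun _ => τ)
  | .atom _ => h
  | .unit => unit p
  | .arrow _ B => (h.substA B).arrow
  | .prod A B => (h.substA A).prod (h.substA B)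

theorem exists_ite (h : HasCond p τ) (E : Tmx [] (.arrow A (Tyx.bool p)))
    (F G : Tmx [] (.arrow A τ)) :
    ∃ H : Tmx [] (.arrow A τ), ∀ (t : Tmx [] A) (b : Bool),
      Eqvx (E.app t) (Tmx.bool p b) → Eqvx (H.app t) (bif b then F.app t else G.app t) := by
  obtain ⟨I, hI⟩ := h
  let body : Tmx [A] τ := .app (.app (.app I.wk (.app E.wk (.var .vz))) (.app F.wk (.var .vz)))
    (.app G.wk (.var .vz))
  refine ⟨.lam body, fun t b hE => ?_⟩
  have hβ : Eqvx (.app (.lam body) t) (.app (.app (.app I (E.app t)) (F.app t)) (G.app t)) := by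
    simpa only [body, Tmx.subst1, Tmx.subst, Tmx.wk_subst, Tmx.wk_nil, Substx.cons]
      using Eqvx.beta body t
  have hI := hI [] b (F.app t) (G.app t)
  simp only [Tmx.wk_nil] at hI
  exact (hβ.trans (((hE.congArg I).congFun _).congFun _)).trans hI

end HasCond

theorem Tmx.exists_and (E F : Tmx [] (.arrow A (Tyx.bool p))) :
    ∃ G : Tmx [] (.arrow A (Tyx.bool p)), ∀ (t : Tmx [] A) (b b' : Bool),
      Eqvx (E.app t) (bool p b) → Eqvx (F.app t) (bool p b') →
        Eqvx (G.app t) (bool p (b && b')) := by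
  obtain ⟨G, hG⟩ := (HasCond.bool p).exists_ite E F (.const A (bool p false))
  refine ⟨G, fun t b b' hE hF => (hG t b hE).trans ?_⟩
  cases b
  · exact .const_app _ t
  · exact hF

end Conditionals

section Codings

variable {ν : Type} {p : ν} {τ τ' : Tyx ν} {X Y : Type}

open scoped Classical in
/-- A coding of the elements of `X` by closed terms of type `τ`, for which equality with a given
element is decided by a closed term with values in the Church Booleans over `p`. -/
structure Coding (p : ν) (τ : Tyx ν) (X : Type) where
  Codes : Tmx [] τ → X → Prop
  codes_of_eqvx : ∀ {t t' : Tmx [] τ} {x : X}, Eqvx t t' → Codes t x → Codes t' x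
  exists_code : ∀ x : X, ∃ t, Codes t x
  exists_test : ∀ x : X, ∃ E : Tmx [] (.arrow τ (Tyx.bool p)), ∀ (t : Tmx [] τ) (y : X),
    Codes t y → Eqvx (E.app t) (Tmx.bool p (decide (x = y)))

namespace Coding

/-- Every term of type `T` codes the element of a singleton. -/
def unit (p : ν) : Coding p .unit PUnit where
  Codes _ _ := True
  codes_of_eqvx _ _ := trivial
  exists_code _ := ⟨.k, trivial⟩
  exists_test _ := ⟨.const _ (.bool p true), fun t _ _ => by simpa using Eqvx.const_app _ t⟩

/-- A Boolean is coded by the terms provably equal to its Church Boolean. -/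
def bool (p : ν) : Coding p (Tyx.bool p) Bool where
  Codes t b := Eqvx t (.bool p b)
  codes_of_eqvx h ht := h.symm.trans ht
  exists_code b := ⟨_, .refl (.bool p b)⟩
  exists_test x := by
    obtain ⟨E, hE⟩ := (HasCond.bool p).exists_ite (.lam (.var .vz))
      (.const _ (.bool p x)) (.const _ (.bool p !x))
    refine ⟨E, fun t y ht => (hE t y ((Eqvx.beta _ t).trans ht)).trans ?_⟩
    cases x <;> cases y <;> simpa using Eqvx.const_app _ t

/-- The restriction of a coding along an injection. -/
def comap (c : Coding p τ Y) (f : X → Y) (hf : Function.Injective f) : Coding p τ X where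
  Codes t x := c.Codes t (f x)
  codes_of_eqvx := c.codes_of_eqvx
  exists_code x := c.exists_code (f x)
  exists_test x := by
    obtain ⟨E, hE⟩ := c.exists_test (f x)
    exact ⟨E, fun t y ht => decide_eq_decide.2 hf.eq_iff ▸ hE t (f y) ht⟩

/-- Elements of a product are coded componentwise. -/
def prod (c : Coding p τ X) (c' : Coding p τ' Y) : Coding p (.prod τ τ') (X × Y) where
  Codes t x := c.Codes t.p1 x.1 ∧ c'.Codes t.p2 x.2
  codes_of_eqvx h ht := ⟨c.codes_of_eqvx (.congP1 h) ht.1, c'.codes_of_eqvx (.congP2 h) ht.2⟩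
  exists_code x := by
    obtain ⟨t, ht⟩ := c.exists_code x.1
    obtain ⟨s, hs⟩ := c'.exists_code x.2
    exact ⟨t.pair s, c.codes_of_eqvx (.symm (.prodBeta1 _ _)) ht,
      c'.codes_of_eqvx (.symm (.prodBeta2 _ _)) hs⟩
  exists_test x := by
    obtain ⟨E, hE⟩ := c.exists_test x.1
    obtain ⟨F, hF⟩ := c'.exists_test x.2
    obtain ⟨G, hG⟩ := Tmx.exists_and (E.comp (.p1 (.var .vz))) (F.comp (.p2 (.var .vz)))
    refine ⟨G, fun t y ht => ?_⟩
    have hE := (Eqvx.comp_app E (.p1 (.var .vz)) t).trans (hE _ _ ht.1)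
    have hF := (Eqvx.comp_app F (.p2 (.var .vz)) t).trans (hF _ _ ht.2)
    classical
    rw [decide_eq_decide.2 Prod.ext_iff, Bool.decide_and]
    exact hG t _ _ hE hF

/-- The closed term `F` computes the function `g` on codes. -/
def Computes (c : Coding p τ X) (c' : Coding p τ' Y) (F : Tmx [] (.arrow τ τ')) (g : X → Y) :
    Prop :=
  ∀ (t : Tmx [] τ) (x : X), c.Codes t x → c'.Codes (F.app t) (g x)

open scoped Classical in
theorem Computes.exists_update {c : Coding p τ X} {c' : Coding p τ' Y} (hτ' : HasCond p τ')
    {F : Tmx [] (.arrow τ τ')} {g : X → Y} (hF : c.Computes c' F g) (x : X) (y : Y) :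
    ∃ F', c.Computes c' F' (Function.update g x y) := by
  obtain ⟨E, hE⟩ := c.exists_test x
  obtain ⟨s, hs⟩ := c'.exists_code y
  obtain ⟨F', hF'⟩ := hτ'.exists_ite E (.const τ s) F
  refine ⟨F', fun t z ht => c'.codes_of_eqvx (hF' t _ (hE t z ht)).symm ?_⟩
  obtain rfl | hz := eq_or_ne x z
  · simpa using c'.codes_of_eqvx (.symm (.const_app s t)) hs
  · simpa [hz, hz.symm] using hF t z ht

theorem exists_computes [Finite X] [Nonempty Y] (c : Coding p τ X) (c' : Coding p τ' Y)
    (hτ' : HasCond p τ') (g : X → Y) : ∃ F, c.Computes c' F g := by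
  classical
  have := Fintype.ofFinite X
  obtain ⟨y₀⟩ := ‹Nonempty Y›
  suffices h : ∀ s : Finset X, ∃ F, c.Computes c' F (s.piecewise g fun _ => y₀) by
    simpa only [Finset.piecewise_univ] using h .univ
  intro s
  induction s using Finset.induction_on with
  | empty =>
    obtain ⟨t₀, ht₀⟩ := c'.exists_code y₀
    exact ⟨.const τ t₀, fun t _ _ => c'.codes_of_eqvx (.symm (.const_app t₀ t)) ht₀⟩
  | insert x s _ ih =>
    obtain ⟨F, hF⟩ := ih
    simpa only [Finset.piecewise_insert] using hF.exists_update hτ' x (g x)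

open scoped Classical in
theorem exists_test_computes [Finite X] (c : Coding p τ X) (c' : Coding p τ' Y) (g : X → Y) :
    ∃ E : Tmx [] (.arrow (.arrow τ τ') (Tyx.bool p)), ∀ (F : Tmx [] (.arrow τ τ')) (h : X → Y),
      c.Computes c' F h → Eqvx (E.app F) (Tmx.bool p (decide (g = h))) := by
  have := Fintype.ofFinite X
  suffices h : ∀ s : Finset X, ∃ E : Tmx [] (.arrow (.arrow τ τ') (Tyx.bool p)),
      ∀ (F : Tmx [] (.arrow τ τ')) (h : X → Y), c.Computes c' F h →
        Eqvx (E.app F) (Tmx.bool p (decide (∀ x ∈ s, g x = h x))) by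
    obtain ⟨E, hE⟩ := h .univ
    have huniv (h : X → Y) : (∀ x ∈ Finset.univ, g x = h x) ↔ g = h := by
      simp only [Finset.mem_univ, forall_const, funext_iff]
    exact ⟨E, fun F h hF => decide_eq_decide.2 (huniv h) ▸ hE F h hF⟩
  intro s
  induction s using Finset.induction_on with
  | empty => exact ⟨.const _ (.bool p true), fun F _ _ => by simpa using Eqvx.const_app _ F⟩
  | insert x s _ ih =>
    obtain ⟨E, hE⟩ := ih
    obtain ⟨E', hE'⟩ := c'.exists_test (g x)
    obtain ⟨t, ht⟩ := c.exists_code x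
    obtain ⟨G, hG⟩ := Tmx.exists_and (E'.comp (.app (.var .vz) t.wk)) E
    refine ⟨G, fun F h hF => ?_⟩
    have happ := Eqvx.comp_app E' (.app (.var .vz) t.wk) F
    simp only [Tmx.subst1, Tmx.subst, Tmx.wk_subst, Tmx.wk_nil, Substx.cons] at happ
    simpa only [Finset.forall_mem_insert, Bool.decide_and] using
      hG F _ _ (happ.trans (hE' _ _ (hF t x ht))) (hE F h hF)

/-- A function is coded by the terms that compute it on codes. -/
def arrow [Finite X] [Nonempty Y] (c : Coding p τ X) (c' : Coding p τ' Y) (hτ' : HasCond p τ') :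
    Coding p (.arrow τ τ') (X → Y) where
  Codes := c.Computes c'
  codes_of_eqvx h hF t x ht := c'.codes_of_eqvx (h.congFun t) (hF t x ht)
  exists_code := c.exists_computes c' hτ'
  exists_test := c.exists_test_computes c'

theorem exists_pow (p : ν) (X : Type) [Finite X] :
    ∃ τ : Tyx ν, HasCond p τ ∧ Nonempty (Coding p τ (X → Bool)) := by
  induction X using Finite.induction_empty_option with
  | of_equiv e ih =>
    obtain ⟨τ, hτ, ⟨c⟩⟩ := ih
    exact ⟨τ, hτ, ⟨c.comap (· ∘ e) e.surjective.injective_comp_right⟩⟩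
  | h_empty =>
    exact ⟨.unit, .unit p, ⟨(unit p).comap (fun _ => ⟨⟩) (Function.injective_of_subsingleton _)⟩⟩
  | h_option ih =>
    obtain ⟨τ, hτ, ⟨c⟩⟩ := ih
    refine ⟨_, (HasCond.bool p).prod hτ,
      ⟨((bool p).prod c).comap (fun f => (f none, f ∘ some)) fun _ _ hfg => ?_⟩⟩
    obtain ⟨hnone, hsome⟩ := Prod.ext_iff.1 hfg
    exact funext (Option.rec hnone (congrFun hsome))

theorem exists_of_finite (p : ν) (X : Type) [Finite X] :
    ∃ τ : Tyx ν, HasCond p τ ∧ Nonempty (Coding p τ X) := by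
  classical
  obtain ⟨τ, hτ, ⟨c⟩⟩ := exists_pow p X
  refine ⟨τ, hτ, ⟨c.comap (fun x y => decide (x = y)) fun x y hxy => ?_⟩⟩
  simpa using congrFun hxy y

/-- The extension of a coding of `X` to the full type hierarchy over `X`. -/
def interp [Finite X] [Nonempty X] (c : Coding p τ X) (hτ : HasCond p τ) :
    ∀ A : Tyx ν, Coding p (A.substA fun _ => τ) (Interp X A)
  | .atom _ => c
  | .unit => unit p
  | .arrow A B => (c.interp hτ A).arrow (c.interp hτ B) (hτ.substA B)
  | .prod A B => (c.interp hτ A).prod (c.interp hτ B)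

theorem codes_subst_eval [Finite X] [Nonempty X] (c : Coding p τ X) (hτ : HasCond p τ)
    {Γ : Ctxx ν} {A : Tyx ν} (t : Tmx Γ A)
    (σ : Substx (Γ.map (Tyx.substA fun _ => τ)) []) (η : Envx X Γ)
    (h : ∀ (B : Tyx ν) (v : Varx Γ B), (c.interp hτ B).Codes (σ _ (v.substA _)) (η B v)) :
    (c.interp hτ A).Codes ((t.substA fun _ => τ).subst σ) (t.eval X η) := by
  induction t with
  | var v => exact h _ v
  | k => trivial
  | app _ _ ihf iha => exact ihf σ η h _ _ (iha σ η h)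
  | pair _ _ iha ihb =>
    exact ⟨codes_of_eqvx _ (.symm (.prodBeta1 _ _)) (iha σ η h),
      codes_of_eqvx _ (.symm (.prodBeta2 _ _)) (ihb σ η h)⟩
  | p1 _ ih => exact (ih σ η h).1
  | p2 _ ih => exact (ih σ η h).2
  | lam b ih =>
    intro s x hs
    refine codes_of_eqvx _ (.symm (.beta_subst _ σ s)) (ih _ (Envx.cons x η) ?_)
    rintro C (_ | w)
    exacts [hs, h C w]

theorem codes_eval [Finite X] [Nonempty X] (c : Coding p τ X) (hτ : HasCond p τ) {A : Tyx ν}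
    (t : Tmx [] A) : (c.interp hτ A).Codes (t.substA fun _ => τ) (t.eval X (.nil X)) := by
  have h := c.codes_subst_eval hτ t (fun _ v => .var v) (.nil X) fun _ v => v.elim0
  rwa [Tmx.subst_id] at h

end Coding

theorem exists_separating_term (p : ν) {A : Tyx ν} {a b : Tmx [] A} (hab : ¬ Eqvx a b) :
    ∃ (τ : Tyx ν) (E : Tmx [] (.arrow (A.substA fun _ => τ) (Tyx.bool p))),
      Eqvx (E.app (a.substA _)) (Tmx.bool p true) ∧
        Eqvx (E.app (b.substA _)) (Tmx.bool p false) := by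
  obtain ⟨X, _, _, hne⟩ := exists_finite_eval_ne hab
  obtain ⟨τ, hτ, ⟨c⟩⟩ := Coding.exists_of_finite p X
  obtain ⟨E, hE⟩ := (c.interp hτ A).exists_test (a.eval X (.nil X))
  refine ⟨τ, E, ?_, ?_⟩
  · simpa only [decide_true] using hE _ _ (c.codes_eval hτ a)
  · simpa only [hne, decide_false] using hE _ _ (c.codes_eval hτ b)

end Codings

/--
**Theorem 9.2.** If `a` and `b` are closed terms of Λ× of the same type and `a = b` is
not provable in Λ×, then one can construct type-instances `a′` and `b′` of `a` and `b`
respectively, closed terms `h, h₁, …, h_l` (`l ≥ 0`), and find a natural number `i`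
such that, for a variable `x : p × p` (`p` an atomic type), the equalities
`π^i(h a′)h₁…h_l (p¹x)(p²x) = p¹x` and `π^i(h b′)h₁…h_l (p¹x)(p²x) = p²x` are provable
in Λ×.
-/
theorem boehm_lambda_products_closed {ν : Type} {A : Tyx ν}
    (a b : Tmx ([] : Ctxx ν) A) (hne : ¬ Eqvx a b) (p : ν) :
    ∃ (σ : ν → Tyx ν) (G : Tyx ν)
      (h : Tmx ([] : Ctxx ν) (Tyx.arrow (A.substA σ) G))
      (Bs : List (Tyx ν)) (hs : HListx ([] : Ctxx ν) Bs) (n i : ℕ)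
      (ua ub : Tmx ([] : Ctxx ν)
        (Tyx.arrsR Bs (Tyx.arrow (.atom p) (Tyx.arrow (.atom p) (.atom p))))),
      PiStep n i (h.app (a.substA σ)) ua ∧
      PiStep n i (h.app (b.substA σ)) ub ∧
      Eqvx (((ua.apps hs).wk.app (.p1 (.var .vz))).app (.p2 (.var .vz))
              : Tmx [Tyx.prod (.atom p) (.atom p)] (.atom p))
           (.p1 (.var .vz)) ∧
      Eqvx (((ub.apps hs).wk.app (.p1 (.var .vz))).app (.p2 (.var .vz))
              : Tmx [Tyx.prod (.atom p) (.atom p)] (.atom p))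
           (.p2 (.var .vz)) := by
  obtain ⟨τ, E, ha, hb⟩ := exists_separating_term p hne
  exact ⟨fun _ => τ, Tyx.bool p, E, [], .nil, 1, 1, E.app (a.substA _), E.app (b.substA _),
    .one _, .one _, ha.wk_app_app _ _, hb.wk_app_app _ _⟩
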